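/- arXiv:2411.04031 — 3 statements merged into one kernel-verified Lean document; each statement's English description precedes it below -/
import Mathlib

section
/- (Expressivity gap) The formula p⟹q is not convex-invariant; hence no formula of the fragment L_⊞⟐ (and a fortiori no formula of L_⊞ or of L_⟐) is logically equivalent to p⟹q. The formula ⊞?p is not union-invariant; hence no formula of the fragment L_⟹! is logically equivalent to ⊞?p. Consequently L_⟹ is strictly more expressive than each of L_⟐, L_⊞, L_⊞⟐, L_⟹!. -/
/-- Formulas of the inquisitive modal language `L_⟹`. -/
inductive Form (P : Type) : Type
  | atom : P → Form P
  | bot : Form P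
  | and : Form P → Form P → Form P
  | impl : Form P → Form P → Form P
  | idisj : Form P → Form P → Form P
  | yields : Form P → Form P → Form P

/-- An inhabited neighborhood model (in-model). -/
structure InModel (P : Type) where
  W : Type
  ne : Nonempty W
  Nb : W → Set (Set W)
  nb_nonempty : ∀ w, ∀ s ∈ Nb w, s.Nonempty
  V : W → P → Bool

/-- Support of a formula at an information state. -/
def support {P : Type} (M : InModel P) : Form P → Set M.W → Prop
  | .atom p, s => ∀ w ∈ s, M.V w p = true
  | .bot, s => s = ∅
  | .and φ ψ, s => support M φ s ∧ support M ψ s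
  | .impl φ ψ, s => ∀ t : Set M.W, t ⊆ s → support M φ t → support M ψ t
  | .idisj φ ψ, s => support M φ s ∨ support M ψ s
  | .yields φ ψ, s => ∀ w ∈ s, ∀ t ∈ M.Nb w, support M φ t → support M ψ t

/-- Truth at a world: support at the corresponding singleton state. -/
def truth {P : Type} (M : InModel P) (w : M.W) (φ : Form P) : Prop :=
  support M φ {w}

/-- A formula is truth-conditional if support at any state amounts to truth at
every world of the state. -/
def TruthConditional {P : Type} (φ : Form P) : Prop :=
  ∀ (M : InModel P) (s : Set M.W), support M φ s ↔ ∀ w ∈ s, truth M w φ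

/-- Logical equivalence: same supporting states in every in-model. -/
def EquivF {P : Type} (φ ψ : Form P) : Prop :=
  ∀ (M : InModel P) (s : Set M.W), support M φ s ↔ support M ψ s

def Form.neg {P : Type} (φ : Form P) : Form P := .impl φ .bot
def Form.top {P : Type} : Form P := Form.neg .bot
def Form.or {P : Type} (φ ψ : Form P) : Form P := Form.neg (.and (Form.neg φ) (Form.neg ψ))
def Form.box {P : Type} (φ : Form P) : Form P := .yields Form.top φ
def Form.dia {P : Type} (φ : Form P) : Form P := Form.neg (.yields φ .bot)
def Form.quest {P : Type} (φ : Form P) : Form P := .idisj φ (Form.neg φ)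

/-- Declaratives: formulas where `⩔` occurs only within the scope of `⟹`. -/
inductive IsDecl {P : Type} : Form P → Prop
  | atom (p : P) : IsDecl (.atom p)
  | bot : IsDecl .bot
  | and {α β : Form P} : IsDecl α → IsDecl β → IsDecl (.and α β)
  | impl {α β : Form P} : IsDecl α → IsDecl β → IsDecl (.impl α β)
  | yields (φ ψ : Form P) : IsDecl (.yields φ ψ)

/-- The fragment `L_⟐`. -/
inductive InLdia {P : Type} : Form P → Prop
  | atom (p : P) : InLdia (.atom p)
  | bot : InLdia .bot
  | and {φ ψ : Form P} : InLdia φ → InLdia ψ → InLdia (.and φ ψ)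
  | impl {φ ψ : Form P} : InLdia φ → InLdia ψ → InLdia (.impl φ ψ)
  | idisj {φ ψ : Form P} : InLdia φ → InLdia ψ → InLdia (.idisj φ ψ)
  | dia {φ : Form P} : InLdia φ → InLdia (Form.dia φ)

/-- The fragment `L_⊞`. -/
inductive InLbox {P : Type} : Form P → Prop
  | atom (p : P) : InLbox (.atom p)
  | bot : InLbox .bot
  | and {φ ψ : Form P} : InLbox φ → InLbox ψ → InLbox (.and φ ψ)
  | impl {φ ψ : Form P} : InLbox φ → InLbox ψ → InLbox (.impl φ ψ)
  | idisj {φ ψ : Form P} : InLbox φ → InLbox ψ → InLbox (.idisj φ ψ)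
  | box {φ : Form P} : InLbox φ → InLbox (Form.box φ)

/-- The fragment `L_⊞⟐`. -/
inductive InLboxdia {P : Type} : Form P → Prop
  | atom (p : P) : InLboxdia (.atom p)
  | bot : InLboxdia .bot
  | and {φ ψ : Form P} : InLboxdia φ → InLboxdia ψ → InLboxdia (.and φ ψ)
  | impl {φ ψ : Form P} : InLboxdia φ → InLboxdia ψ → InLboxdia (.impl φ ψ)
  | idisj {φ ψ : Form P} : InLboxdia φ → InLboxdia ψ → InLboxdia (.idisj φ ψ)
  | box {φ : Form P} : InLboxdia φ → InLboxdia (Form.box φ)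
  | dia {φ : Form P} : InLboxdia φ → InLboxdia (Form.dia φ)

/-- The fragment `L_⟹!`: every modal subformula has the form `φ ⟹ α` with `α`
a declarative. -/
inductive InLyd {P : Type} : Form P → Prop
  | atom (p : P) : InLyd (.atom p)
  | bot : InLyd .bot
  | and {φ ψ : Form P} : InLyd φ → InLyd ψ → InLyd (.and φ ψ)
  | impl {φ ψ : Form P} : InLyd φ → InLyd ψ → InLyd (.impl φ ψ)
  | idisj {φ ψ : Form P} : InLyd φ → InLyd ψ → InLyd (.idisj φ ψ)
  | yields {φ α : Form P} : InLyd φ → InLyd α → IsDecl α → InLyd (.yields φ α)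

/-- Upward closure `M^↑`. -/
def InModel.up {P : Type} (M : InModel P) : InModel P where
  W := M.W
  ne := M.ne
  Nb := fun w => {t | t.Nonempty ∧ ∃ s ∈ M.Nb w, s ⊆ t}
  nb_nonempty := fun _ _ hs => hs.1
  V := M.V

/-- Downward closure `M^↓`. -/
def InModel.down {P : Type} (M : InModel P) : InModel P where
  W := M.W
  ne := M.ne
  Nb := fun w => {t | t.Nonempty ∧ ∃ s ∈ M.Nb w, t ⊆ s}
  nb_nonempty := fun _ _ hs => hs.1
  V := M.V

/-- Convex closure `M^↕`. -/
def InModel.conv {P : Type} (M : InModel P) : InModel P where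
  W := M.W
  ne := M.ne
  Nb := fun w => {t | t.Nonempty ∧ ∃ s ∈ M.Nb w, ∃ s' ∈ M.Nb w, s ⊆ t ∧ t ⊆ s'}
  nb_nonempty := fun _ _ hs => hs.1
  V := M.V

/-- Union closure `M^∪`. -/
def InModel.uni {P : Type} (M : InModel P) : InModel P where
  W := M.W
  ne := M.ne
  Nb := fun w => {t | t.Nonempty ∧ ∃ S ⊆ M.Nb w, t = ⋃₀ S}
  nb_nonempty := fun _ _ hs => hs.1
  V := M.V

def UpInvariant {P : Type} (φ : Form P) : Prop :=
  ∀ (M : InModel P) (s : Set M.W), support M φ s ↔ support M.up φ s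

def DownInvariant {P : Type} (φ : Form P) : Prop :=
  ∀ (M : InModel P) (s : Set M.W), support M φ s ↔ support M.down φ s

def ConvexInvariant {P : Type} (φ : Form P) : Prop :=
  ∀ (M : InModel P) (s : Set M.W), support M φ s ↔ support M.conv φ s

def UnionInvariant {P : Type} (φ : Form P) : Prop :=
  ∀ (M : InModel P) (s : Set M.W), support M φ s ↔ support M.uni φ s

/-!
Two features of the closures `M^↕` and `M^∪` drive the argument. Passing to `M^↕` adds only states
lying between two neighborhoods, and support is downward closed, so `⊞φ` is tested on the upper
bounds and `⟐φ` on the lower ones: convex closure is invisible to both. Passing to `M^∪` adds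
unions, and a truth-conditional consequent that holds on every member of a family holds on its
union: union closure is invisible to `φ ⟹ α` with `α` a declarative.

Neither closure is invisible to all of `L_⟹`. Take all valuations as worlds. If the neighborhoods
are `{allTrue}` and the set of all worlds, then `p ⟹ q` holds, but the intermediate state
`{w | w p}` supports `p` and not `q`. If they are `{w | w p}` and `{w | ¬ w p}`, then `⊞?p` holds,
but `?p` fails on their union.
-/

open Set

variable {P : Type} {M : InModel P} {φ ψ α : Form P}

section Support

variable {s t : Set M.W}

theorem support.anti (hs : support M φ s) (hts : t ⊆ s) : support M φ t := by
  induction φ generalizing s t with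
  | atom p => exact fun w hw => hs w (hts hw)
  | bot => exact subset_eq_empty hts hs
  | and φ ψ ihφ ihψ => exact ⟨ihφ hs.1 hts, ihψ hs.2 hts⟩
  | impl φ ψ => exact fun u hu => hs u (hu.trans hts)
  | idisj φ ψ ihφ ihψ => exact hs.imp (ihφ · hts) (ihψ · hts)
  | yields φ ψ => exact fun w hw => hs w (hts hw)

theorem support_neg : support M φ.neg s ↔ ∀ w ∈ s, ¬ support M φ {w} := by
  constructor
  · exact fun h w hw hφ => singleton_ne_empty w (h {w} (singleton_subset_iff.2 hw) hφ)
  · exact fun h t hts hφ => eq_empty_of_forall_notMem fun w hw =>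
      h w (hts hw) (hφ.anti (singleton_subset_iff.2 hw))

theorem support_box : support M φ.box s ↔ ∀ w ∈ s, ∀ t ∈ M.Nb w, support M φ t :=
  ⟨fun h w hw t ht => h w hw t ht fun _ _ hu => hu, fun h w hw t ht _ => h w hw t ht⟩

theorem support_dia : support M φ.dia s ↔ ∀ w ∈ s, ∃ t ∈ M.Nb w, support M φ t := by
  refine support_neg.trans (forall₂_congr fun w _ => ?_)
  constructor
  · intro h
    by_contra! hφ
    refine h fun v hv t ht hφt => absurd hφt (hφ t ?_)
    rwa [mem_singleton_iff.1 hv] at ht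
  · rintro ⟨t, ht, hφt⟩ h
    exact (M.nb_nonempty w t ht).ne_empty (h w rfl t ht hφt)

end Support

section TruthConditional

theorem IsDecl.truthConditional (hα : IsDecl α) : TruthConditional α := by
  refine fun M s => ⟨fun h w hw => h.anti (singleton_subset_iff.2 hw), fun h => ?_⟩
  induction hα generalizing s with
  | atom p => exact fun w hw => h w hw w rfl
  | bot => exact eq_empty_of_forall_notMem fun w hw => singleton_ne_empty w (h w hw)
  | and _ _ ihα ihβ => exact ⟨ihα s fun w hw => (h w hw).1, ihβ s fun w hw => (h w hw).2⟩
  | impl _ _ _ ihβ =>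
    exact fun t hts ht => ihβ t fun w hw =>
      h w (hts hw) {w} subset_rfl (ht.anti (singleton_subset_iff.2 hw))
  | yields φ ψ => exact fun w hw => h w hw w rfl

theorem TruthConditional.support_sUnion (hα : TruthConditional α) {S : Set (Set M.W)}
    (hS : ∀ t ∈ S, support M α t) : support M α (⋃₀ S) := by
  refine (hα M _).2 ?_
  rintro w ⟨t, ht, hw⟩
  exact (hα M t).1 (hS t ht) w hw

end TruthConditional

section ConvexInvariant

theorem InModel.Nb_subset_conv_Nb (M : InModel P) (w : M.W) : M.Nb w ⊆ M.conv.Nb w :=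
  fun t ht => ⟨M.nb_nonempty w t ht, t, ht, t, ht, subset_rfl, subset_rfl⟩

theorem ConvexInvariant.box (hφ : ConvexInvariant φ) : ConvexInvariant φ.box := by
  refine fun M s => support_box.trans (Iff.trans ?_ (support_box (M := M.conv)).symm)
  refine forall₂_congr fun w _ => ⟨?_, ?_⟩
  · rintro h t ⟨-, -, -, u, hu, -, htu⟩
    exact (hφ M t).1 ((h u hu).anti htu)
  · exact fun h t ht => (hφ M t).2 (h t (M.Nb_subset_conv_Nb w ht))

theorem ConvexInvariant.dia (hφ : ConvexInvariant φ) : ConvexInvariant φ.dia := by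
  refine fun M s => support_dia.trans (Iff.trans ?_ (support_dia (M := M.conv)).symm)
  refine forall₂_congr fun w _ => ⟨?_, ?_⟩
  · exact fun ⟨t, ht, hφt⟩ => ⟨t, M.Nb_subset_conv_Nb w ht, (hφ M t).1 hφt⟩
  · rintro ⟨t, ⟨-, u, hu, -, -, hut, -⟩, hφt⟩
    exact ⟨u, hu, ((hφ M t).2 hφt).anti hut⟩

theorem InLboxdia.convexInvariant (hφ : InLboxdia φ) : ConvexInvariant φ := by
  induction hφ with
  | atom p => exact fun _ _ => Iff.rfl
  | bot => exact fun _ _ => Iff.rfl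
  | and _ _ ihφ ihψ => exact fun M s => and_congr (ihφ M s) (ihψ M s)
  | impl _ _ ihφ ihψ =>
    exact fun M s => forall₂_congr fun t _ => imp_congr (ihφ M t) (ihψ M t)
  | idisj _ _ ihφ ihψ => exact fun M s => or_congr (ihφ M s) (ihψ M s)
  | box _ ih => exact ih.box
  | dia _ ih => exact ih.dia

theorem EquivF.convexInvariant (h : EquivF φ ψ) (hφ : ConvexInvariant φ) : ConvexInvariant ψ :=
  fun M s => (h M s).symm.trans ((hφ M s).trans (h M.conv s))

end ConvexInvariant

section UnionInvariant

theorem InModel.Nb_subset_uni_Nb (M : InModel P) (w : M.W) : M.Nb w ⊆ M.uni.Nb w :=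
  fun t ht => ⟨M.nb_nonempty w t ht, {t}, singleton_subset_iff.2 ht, (sUnion_singleton t).symm⟩

theorem UnionInvariant.yields (hφ : UnionInvariant φ) (hα : UnionInvariant α)
    (hα_tc : TruthConditional α) : UnionInvariant (.yields φ α) := by
  refine fun M s => forall₂_congr fun w _ => ⟨?_, ?_⟩
  · rintro h _ ⟨-, S, hS, rfl⟩ hφS
    have hαS : ∀ t ∈ S, support M α t := fun t ht =>
      h t (hS ht) (((hφ M _).2 hφS).anti (subset_sUnion_of_mem ht))
    exact (hα M _).1 (hα_tc.support_sUnion hαS)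
  · exact fun h t ht hφt => (hα M t).2 (h t (M.Nb_subset_uni_Nb w ht) ((hφ M t).1 hφt))

theorem InLyd.unionInvariant (hφ : InLyd φ) : UnionInvariant φ := by
  induction hφ with
  | atom p => exact fun _ _ => Iff.rfl
  | bot => exact fun _ _ => Iff.rfl
  | and _ _ ihφ ihψ => exact fun M s => and_congr (ihφ M s) (ihψ M s)
  | impl _ _ ihφ ihψ =>
    exact fun M s => forall₂_congr fun t _ => imp_congr (ihφ M t) (ihψ M t)
  | idisj _ _ ihφ ihψ => exact fun M s => or_congr (ihφ M s) (ihψ M s)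
  | yields _ _ hα ihφ ihα => exact ihφ.yields ihα hα.truthConditional

theorem EquivF.unionInvariant (h : EquivF φ ψ) (hφ : UnionInvariant φ) : UnionInvariant ψ :=
  fun M s => (h M s).symm.trans ((hφ M s).trans (h M.uni s))

end UnionInvariant

section Countermodels

/-- The in-model whose worlds are all valuations of the atoms, each world having the same family
`N` of neighborhoods; both countermodels are of this form. -/
def valuationModel (N : Set (Set (P → Bool))) (hN : ∀ s ∈ N, s.Nonempty) : InModel P where
  W := P → Bool
  ne := inferInstance
  Nb _ := N
  nb_nonempty _ := hN
  V w := w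

theorem not_convexInvariant_yields_atom {p q : P} (hpq : p ≠ q) :
    ¬ ConvexInvariant (.yields (.atom p) (.atom q)) := by
  classical
  intro h_inv
  let allTrue : P → Bool := fun _ => true
  let M := valuationModel {{allTrue}, univ} (by simp)
  have h_supp : support M (.yields (.atom p) (.atom q)) {allTrue} := by
    rintro _ _ _ (rfl | rfl) hp
    · rintro _ rfl
      rfl
    · exact absurd (hp (fun _ => false) (mem_univ _)) Bool.false_ne_true
  have h_between : {w : P → Bool | w p = true} ∈ M.conv.Nb allTrue :=
    ⟨⟨allTrue, rfl⟩, {allTrue}, .inl rfl, univ, .inr rfl, singleton_subset_iff.2 rfl,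
      subset_univ _⟩
  have h_only_p : decide (q = p) = true :=
    (h_inv M _).1 h_supp allTrue rfl _ h_between (fun _ hw => hw) (fun r => decide (r = p))
      (decide_eq_true rfl)
  exact hpq (of_decide_eq_true h_only_p).symm

theorem not_unionInvariant_box_quest_atom (p : P) :
    ¬ UnionInvariant (Form.box (Form.quest (.atom p))) := by
  intro h_inv
  let allTrue : P → Bool := fun _ => true
  let allFalse : P → Bool := fun _ => false
  let N : Set (Set (P → Bool)) := {{w | w p = true}, {w | w p = false}}
  let M := valuationModel N (by rintro _ (rfl | rfl); exacts [⟨allTrue, rfl⟩, ⟨allFalse, rfl⟩])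
  have h_supp : support M (Form.box (Form.quest (.atom p))) {allTrue} := by
    refine support_box.2 ?_
    rintro _ _ _ (rfl | rfl)
    · exact .inl fun _ hw => hw
    · exact .inr (support_neg.2 fun w hw hp => Bool.false_ne_true (hw.symm.trans (hp w rfl)))
  have h_cover : univ = ⋃₀ N := by
    ext w
    simp [N]
  have h_union : univ ∈ M.uni.Nb allTrue := ⟨⟨allTrue, trivial⟩, N, subset_rfl, h_cover⟩
  rcases support_box.1 ((h_inv M _).1 h_supp) allTrue rfl univ h_union with hp | hnp
  · exact Bool.false_ne_true (hp allFalse trivial)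
  · exact support_neg.1 hnp allTrue trivial fun _ hw => hw ▸ rfl

end Countermodels

section Fragments

theorem InLbox.inLboxdia (hφ : InLbox φ) : InLboxdia φ := by
  induction hφ with
  | atom p => exact .atom p
  | bot => exact .bot
  | and _ _ ihφ ihψ => exact .and ihφ ihψ
  | impl _ _ ihφ ihψ => exact .impl ihφ ihψ
  | idisj _ _ ihφ ihψ => exact .idisj ihφ ihψ
  | box _ ih => exact .box ih

theorem InLdia.inLboxdia (hφ : InLdia φ) : InLboxdia φ := by
  induction hφ with
  | atom p => exact .atom p
  | bot => exact .bot
  | and _ _ ihφ ihψ => exact .and ihφ ihψ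
  | impl _ _ ihφ ihψ => exact .impl ihφ ihψ
  | idisj _ _ ihφ ihψ => exact .idisj ihφ ihψ
  | dia _ ih => exact .dia ih

theorem InLboxdia.not_equivF_yields_atom {p q : P} (hpq : p ≠ q) (hφ : InLboxdia φ) :
    ¬ EquivF φ (.yields (.atom p) (.atom q)) :=
  fun h => not_convexInvariant_yields_atom hpq (h.convexInvariant hφ.convexInvariant)

theorem InLyd.not_equivF_box_quest_atom (p : P) (hφ : InLyd φ) :
    ¬ EquivF φ (Form.box (Form.quest (.atom p))) :=
  fun h => not_unionInvariant_box_quest_atom p (h.unionInvariant hφ.unionInvariant)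

end Fragments

/-- expressivity gap — `p ⟹ q` is not convex-invariant and hence
not expressible in `L_⊞⟐` (nor in `L_⊞` or `L_⟐`); `⊞?p` is not union-invariant
and hence not expressible in `L_⟹!`; consequently `L_⟹` is strictly more
expressive than each of the fragments. -/
theorem expressivity_gap {P : Type} (p q : P) (hpq : p ≠ q) :
    (¬ ConvexInvariant (Form.yields (.atom p) (.atom q))) ∧
    (∀ φ : Form P, InLboxdia φ → ¬ EquivF φ (Form.yields (.atom p) (.atom q))) ∧
    (∀ φ : Form P, InLbox φ → ¬ EquivF φ (Form.yields (.atom p) (.atom q))) ∧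
    (∀ φ : Form P, InLdia φ → ¬ EquivF φ (Form.yields (.atom p) (.atom q))) ∧
    (¬ UnionInvariant (Form.box (Form.quest (.atom p)))) ∧
    (∀ φ : Form P, InLyd φ → ¬ EquivF φ (Form.box (Form.quest (.atom p)))) ∧
    (∃ χ : Form P, ∀ φ : Form P, InLdia φ → ¬ EquivF φ χ) ∧
    (∃ χ : Form P, ∀ φ : Form P, InLbox φ → ¬ EquivF φ χ) ∧
    (∃ χ : Form P, ∀ φ : Form P, InLboxdia φ → ¬ EquivF φ χ) ∧
    (∃ χ : Form P, ∀ φ : Form P, InLyd φ → ¬ EquivF φ χ) := by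
  have h_boxdia (φ : Form P) (hφ : InLboxdia φ) := hφ.not_equivF_yields_atom hpq
  have h_box (φ : Form P) (hφ : InLbox φ) := h_boxdia φ hφ.inLboxdia
  have h_dia (φ : Form P) (hφ : InLdia φ) := h_boxdia φ hφ.inLboxdia
  have h_yd (φ : Form P) (hφ : InLyd φ) := hφ.not_equivF_box_quest_atom p
  exact ⟨not_convexInvariant_yields_atom hpq, h_boxdia, h_box, h_dia,
    not_unionInvariant_box_quest_atom p, h_yd,
    ⟨_, h_dia⟩, ⟨_, h_box⟩, ⟨_, h_boxdia⟩, ⟨_, h_yd⟩⟩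
end

section
/- (Characteristic formulas) Assume the set P of atoms is finite. Then for every n ∈ ℕ, the characteristic formulas χⁿ and πⁿ are well-defined (all conjunctions and disjunctions in their definition are over finite sets of formulas), and for all in-models M, M', worlds w, w', and states s': (1) M,w ⊨ χⁿ_{M',w'} if and only if M,w ∼ₙ M',w'; (2) M,w ⊨ πⁿ_{M',s'} if and only if there exists s ∈ Σ(w) with M,s ∼ₙ M',s'. -/
/-- Modal depth. -/
def md {P : Type} : Form P → ℕ
  | .atom _ => 0
  | .bot => 0
  | .and φ ψ => max (md φ) (md ψ)
  | .impl φ ψ => max (md φ) (md ψ)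
  | .idisj φ ψ => max (md φ) (md ψ)
  | .yields φ ψ => max (md φ) (md ψ) + 1

/-- Egli-Milner lifting of a relation between worlds to states. -/
def EM {P : Type} {M M' : InModel P} (Z : M.W → M'.W → Prop)
    (s : Set M.W) (s' : Set M'.W) : Prop :=
  (∀ w ∈ s, ∃ w' ∈ s', Z w w') ∧ (∀ w' ∈ s', ∃ w ∈ s, Z w w')

/-- `Z` is an `n`-bisimulation between `M` and `M'` (indices `i ≤ n`). -/
def IsNBisim {P : Type} (M M' : InModel P) (n : ℕ)
    (Z : ℕ → M.W → M'.W → Prop) : Prop :=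
  ∀ i ≤ n, ∀ w w', Z i w w' →
    (∀ p : P, M.V w p = M'.V w' p) ∧
    (∀ j : ℕ, i = j + 1 →
      (∀ s ∈ M.Nb w, ∃ s' ∈ M'.Nb w', EM (Z j) s s') ∧
      (∀ s' ∈ M'.Nb w', ∃ s ∈ M.Nb w, EM (Z j) s s'))

/-- `n`-bisimilarity of world-pointed models. -/
def NBisimW {P : Type} (n : ℕ) (M : InModel P) (w : M.W)
    (M' : InModel P) (w' : M'.W) : Prop :=
  ∃ Z, IsNBisim M M' n Z ∧ Z n w w'

/-- `n`-bisimilarity of state-pointed models. -/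
def NBisimS {P : Type} (n : ℕ) (M : InModel P) (s : Set M.W)
    (M' : InModel P) (s' : Set M'.W) : Prop :=
  ∃ Z, IsNBisim M M' n Z ∧ EM (Z n) s s'

/-- `Z` is a bisimulation between `M` and `M'`. -/
def IsBisim {P : Type} (M M' : InModel P) (Z : M.W → M'.W → Prop) : Prop :=
  (∃ w w', Z w w') ∧
  ∀ w w', Z w w' →
    (∀ p : P, M.V w p = M'.V w' p) ∧
    (∀ s ∈ M.Nb w, ∃ s' ∈ M'.Nb w', EM Z s s') ∧
    (∀ s' ∈ M'.Nb w', ∃ s ∈ M.Nb w, EM Z s s')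

/-- Bisimilarity of world-pointed models. -/
def BisimW {P : Type} (M : InModel P) (w : M.W)
    (M' : InModel P) (w' : M'.W) : Prop :=
  ∃ Z, IsBisim M M' Z ∧ Z w w'

/-- Bisimilarity of state-pointed models. -/
def BisimS {P : Type} (M : InModel P) (s : Set M.W)
    (M' : InModel P) (s' : Set M'.W) : Prop :=
  ∃ Z, IsBisim M M' Z ∧ EM Z s s'

open scoped Classical

def bigAnd {P : Type} : List (Form P) → Form P
  | [] => Form.top
  | [φ] => φ
  | φ :: rest => .and φ (bigAnd rest)

def bigIdisj {P : Type} : List (Form P) → Form P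
  | [] => .bot
  | [φ] => φ
  | φ :: rest => .idisj φ (bigIdisj rest)

def bigOr {P : Type} : List (Form P) → Form P
  | [] => .bot
  | [φ] => φ
  | φ :: rest => Form.or φ (bigOr rest)

/-- Conjunction of a (finite) set of formulas. -/
noncomputable def sAnd {P : Type} (X : Set (Form P)) : Form P :=
  if h : X.Finite then bigAnd h.toFinset.toList else Form.bot

/-- Inquisitive disjunction of a (finite) set of formulas. -/
noncomputable def sIdisj {P : Type} (X : Set (Form P)) : Form P :=
  if h : X.Finite then bigIdisj h.toFinset.toList else Form.bot

/-- Declarative disjunction of a (finite) set of formulas. -/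
noncomputable def sOr {P : Type} (X : Set (Form P)) : Form P :=
  if h : X.Finite then bigOr h.toFinset.toList else Form.bot

/-- `χ⁰_{M,w}`: the conjunction of the literals true at `w`. -/
noncomputable def chiZero {P : Type} [Fintype P] (M : InModel P) (w : M.W) : Form P :=
  bigAnd ((Finset.univ : Finset P).toList.map
    (fun p => if M.V w p then Form.atom p else Form.neg (Form.atom p)))

/-- `πⁿ_{M,s}` built from a family `c` of characteristic formulas:
`¬(⋁{c w : w ∈ s} ⟹ ⩔{¬ c w : w ∈ s})`. -/
noncomputable def piAux {P : Type} (c : ∀ M : InModel P, M.W → Form P)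
    (M : InModel P) (s : Set M.W) : Form P :=
  Form.neg (Form.yields (sOr {f | ∃ w ∈ s, f = c M w})
    (sIdisj {f | ∃ w ∈ s, f = Form.neg (c M w)}))

/-- The characteristic formulas `χⁿ_{M,w}`. -/
noncomputable def chi {P : Type} [Fintype P] : ℕ → ∀ M : InModel P, M.W → Form P
  | 0 => fun M w => chiZero M w
  | n + 1 => fun M w =>
      .and (.and (chiZero M w)
        (sAnd {f | ∃ s ∈ M.Nb w, f = piAux (chi n) M s}))
        (sAnd {f | ∃ (M' : InModel P) (s' : Set M'.W),
          f = Form.neg (piAux (chi n) M' s') ∧ ¬ ∃ s ∈ M.Nb w, NBisimS n M s M' s'})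

/-- The characteristic formulas `πⁿ_{M,s}`. -/
noncomputable def piChar {P : Type} [Fintype P] (n : ℕ) :
    ∀ M : InModel P, Set M.W → Form P :=
  piAux (chi n)

/-!
`πⁿ_{M,s}` is the cover modality `∇` applied to the set `{χⁿ_{M,w} : w ∈ s}`: it is true at a world
having a neighborhood that is Egli-Milner related, through truth, to this set of formulas. Once
`χⁿ` defines `n`-bisimilarity, `πⁿ_{M,s}` therefore says that some neighborhood is `n`-bisimilar to
`s`, and the two conjunctions in `χⁿ⁺¹` become the back and the forth condition. Everything is
finite because a `∇`-formula depends only on a subset of the finitely many `χⁿ`.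
-/

/-- The Egli-Milner lifting of a relation between arbitrary types. `EM` is the instance between the
worlds of two models; the general form also covers sets of neighborhoods, so that the back-and-forth
clause of a bisimulation is a twofold lifting, and the truth relation between worlds and formulas. -/
def EgliMilner {α β : Type*} (R : α → β → Prop) (s : Set α) (t : Set β) : Prop :=
  (∀ a ∈ s, ∃ b ∈ t, R a b) ∧ ∀ b ∈ t, ∃ a ∈ s, R a b

namespace EgliMilner

variable {α β γ : Type*} {s : Set α} {t : Set β} {u : Set γ}

theorem mono {R S : α → β → Prop} (hRS : ∀ a b, R a b → S a b) (h : EgliMilner R s t) :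
    EgliMilner S s t :=
  ⟨fun a ha => (h.1 a ha).imp fun b => And.imp_right (hRS a b),
    fun b hb => (h.2 b hb).imp fun a => And.imp_right (hRS a b)⟩

theorem refl {R : α → α → Prop} (hR : ∀ a, R a a) (s : Set α) : EgliMilner R s s :=
  ⟨fun a ha => ⟨a, ha, hR a⟩, fun a ha => ⟨a, ha, hR a⟩⟩

theorem symm {R : α → β → Prop} {S : β → α → Prop} (hRS : ∀ a b, R a b → S b a)
    (h : EgliMilner R s t) : EgliMilner S t s :=
  ⟨fun b hb => (h.2 b hb).imp fun a => And.imp_right (hRS a b),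
    fun a ha => (h.1 a ha).imp fun b => And.imp_right (hRS a b)⟩

theorem trans {R : α → β → Prop} {S : β → γ → Prop} {T : α → γ → Prop}
    (hRST : ∀ a b c, R a b → S b c → T a c) (h : EgliMilner R s t) (h' : EgliMilner S t u) :
    EgliMilner T s u := by
  constructor
  · intro a ha
    obtain ⟨b, hb, hab⟩ := h.1 a ha
    obtain ⟨c, hc, hbc⟩ := h'.1 b hb
    exact ⟨c, hc, hRST a b c hab hbc⟩
  · intro c hc
    obtain ⟨b, hb, hbc⟩ := h'.2 c hc
    obtain ⟨a, ha, hab⟩ := h.2 b hb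
    exact ⟨a, ha, hRST a b c hab hbc⟩

theorem image_right_iff {R : α → γ → Prop} {f : β → γ} :
    EgliMilner R s (f '' t) ↔ EgliMilner (fun a b => R a (f b)) s t := by
  simp only [EgliMilner, Set.exists_mem_image, Set.forall_mem_image]

end EgliMilner

/-- The `n`-th approximant of bisimilarity, by recursion on `n`. It is the largest relation at
index `n` of an `n`-bisimulation. -/
def BisimApprox {P : Type} (M M' : InModel P) : ℕ → M.W → M'.W → Prop
  | 0 => fun w w' => M.V w = M'.V w'
  | n + 1 => fun w w' =>
      M.V w = M'.V w' ∧ EgliMilner (EgliMilner (BisimApprox M M' n)) (M.Nb w) (M'.Nb w')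

section Bisimulation

variable {P : Type} {M M' M'' : InModel P}

theorem isNBisim_bisimApprox (n : ℕ) (M M' : InModel P) : IsNBisim M M' n (BisimApprox M M') := by
  rintro (_ | i) - w w' h
  · exact ⟨congrFun h, fun _ hj => absurd hj (Nat.succ_ne_zero _).symm⟩
  · refine ⟨congrFun h.1, ?_⟩
    rintro _ ⟨rfl⟩
    exact h.2

theorem IsNBisim.bisimApprox {n : ℕ} {Z : ℕ → M.W → M'.W → Prop} (hZ : IsNBisim M M' n Z)
    {i : ℕ} (hi : i ≤ n) (w : M.W) (w' : M'.W) (h : Z i w w') : BisimApprox M M' i w w' := by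
  induction i generalizing w w' with
  | zero => exact funext (hZ 0 hi w w' h).1
  | succ i ih =>
    obtain ⟨atoms, backForth⟩ := hZ (i + 1) hi w w' h
    have lift : ∀ s s', EM (Z i) s s' → EgliMilner (BisimApprox M M' i) s s' :=
      fun _ _ => EgliMilner.mono (ih (Nat.le_of_succ_le hi))
    exact ⟨funext atoms, EgliMilner.mono lift (backForth i rfl)⟩

theorem nBisimW_iff (n : ℕ) (M M' : InModel P) (w : M.W) (w' : M'.W) :
    NBisimW n M w M' w' ↔ BisimApprox M M' n w w' :=
  ⟨fun ⟨_, hZ, h⟩ => hZ.bisimApprox le_rfl w w' h, fun h => ⟨_, isNBisim_bisimApprox n M M', h⟩⟩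

theorem nBisimS_iff (n : ℕ) (M M' : InModel P) (s : Set M.W) (s' : Set M'.W) :
    NBisimS n M s M' s' ↔ EgliMilner (BisimApprox M M' n) s s' :=
  ⟨fun ⟨_, hZ, h⟩ => EgliMilner.mono (hZ.bisimApprox le_rfl) h,
    fun h => ⟨_, isNBisim_bisimApprox n M M', h⟩⟩

namespace BisimApprox

theorem refl (n : ℕ) (w : M.W) : BisimApprox M M n w w := by
  induction n generalizing w with
  | zero => rfl
  | succ n ih => exact ⟨rfl, EgliMilner.refl (EgliMilner.refl ih) _⟩

theorem symm (n : ℕ) (w : M.W) (w' : M'.W) (h : BisimApprox M M' n w w') :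
    BisimApprox M' M n w' w := by
  induction n generalizing w w' with
  | zero => exact Eq.symm h
  | succ n ih => exact ⟨h.1.symm, EgliMilner.symm (fun _ _ => EgliMilner.symm ih) h.2⟩

theorem trans (n : ℕ) (w : M.W) (w' : M'.W) (w'' : M''.W) (h₁ : BisimApprox M M' n w w')
    (h₂ : BisimApprox M' M'' n w' w'') : BisimApprox M M'' n w w'' := by
  induction n generalizing w w' w'' with
  | zero => exact Eq.trans h₁ h₂
  | succ n ih =>
    have transStates : ∀ s s' s'', EgliMilner (BisimApprox M M' n) s s' →
        EgliMilner (BisimApprox M' M'' n) s' s'' → EgliMilner (BisimApprox M M'' n) s s'' :=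
      fun _ _ _ => EgliMilner.trans ih
    exact ⟨h₁.1.trans h₂.1, EgliMilner.trans transStates h₁.2 h₂.2⟩

/-- The right-hand side is how the negative conjuncts of `χⁿ⁺¹` express the forth condition. -/
theorem forth_iff (n : ℕ) (A : Set (Set M.W)) (A' : Set (Set M'.W)) :
    (∀ s ∈ A, ∃ s' ∈ A', EgliMilner (BisimApprox M M' n) s s') ↔
      ∀ (M'' : InModel P) (s'' : Set M''.W),
        (∃ s ∈ A, EgliMilner (BisimApprox M M'' n) s s'') →
          ∃ s' ∈ A', EgliMilner (BisimApprox M' M'' n) s' s'' := by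
  constructor
  · rintro forth M'' s'' ⟨s, hs, hss''⟩
    obtain ⟨s', hs', hss'⟩ := forth s hs
    exact ⟨s', hs', (hss'.symm (symm n)).trans (trans n) hss''⟩
  · intro h s hs
    obtain ⟨s', hs', hs's⟩ := h M s ⟨s, hs, EgliMilner.refl (refl n) s⟩
    exact ⟨s', hs', hs's.symm (symm n)⟩

end BisimApprox

end Bisimulation

section Truth

variable {P : Type}

theorem bigAnd_cons {l : List (Form P)} (hl : l ≠ []) (φ : Form P) :
    bigAnd (φ :: l) = .and φ (bigAnd l) :=
  bigAnd.eq_3 φ l hl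

theorem bigOr_cons {l : List (Form P)} (hl : l ≠ []) (φ : Form P) :
    bigOr (φ :: l) = .or φ (bigOr l) :=
  bigOr.eq_3 φ l hl

theorem bigIdisj_cons {l : List (Form P)} (hl : l ≠ []) (φ : Form P) :
    bigIdisj (φ :: l) = .idisj φ (bigIdisj l) :=
  bigIdisj.eq_3 φ l hl

variable (M : InModel P) (w : M.W)

theorem truth_and (φ ψ : Form P) : truth M w (.and φ ψ) ↔ truth M w φ ∧ truth M w ψ :=
  Iff.rfl

theorem truth_neg (φ : Form P) : truth M w φ.neg ↔ ¬ truth M w φ := by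
  constructor
  · exact fun h hφ => Set.singleton_ne_empty w (h {w} Set.Subset.rfl hφ)
  · intro h t ht hφ
    rcases Set.subset_singleton_iff_eq.1 ht with rfl | rfl
    · rfl
    · exact absurd hφ h

theorem truth_or (φ ψ : Form P) : truth M w (φ.or ψ) ↔ truth M w φ ∨ truth M w ψ := by
  rw [Form.or, truth_neg, truth_and, truth_neg, truth_neg, or_iff_not_and_not]

theorem not_truth_bot : ¬ truth M w .bot :=
  Set.singleton_ne_empty w

theorem truth_atom (p : P) : truth M w (.atom p) ↔ M.V w p = true := by
  simp only [truth, support, Set.mem_singleton_iff, forall_eq]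

theorem truth_yields (φ ψ : Form P) :
    truth M w (.yields φ ψ) ↔ ∀ t ∈ M.Nb w, support M φ t → support M ψ t := by
  simp only [truth, support, Set.mem_singleton_iff, forall_eq]

theorem truth_bigAnd (l : List (Form P)) : truth M w (bigAnd l) ↔ ∀ φ ∈ l, truth M w φ := by
  induction l using bigAnd.induct with
  | case1 => simp [bigAnd, Form.top, truth_neg, not_truth_bot]
  | case2 φ => simp [bigAnd]
  | case3 φ l hl ih => rw [bigAnd_cons hl, truth_and, ih, List.forall_mem_cons]

theorem truth_bigOr (l : List (Form P)) : truth M w (bigOr l) ↔ ∃ φ ∈ l, truth M w φ := by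
  induction l using bigOr.induct with
  | case1 => simp [bigOr, not_truth_bot]
  | case2 φ => simp [bigOr]
  | case3 φ l hl ih =>
    simp only [bigOr_cons hl, truth_or, ih, List.mem_cons, exists_eq_or_imp]

variable {M} in
theorem support_bigIdisj {s : Set M.W} (hs : s.Nonempty) (l : List (Form P)) :
    support M (bigIdisj l) s ↔ ∃ φ ∈ l, support M φ s := by
  induction l using bigIdisj.induct with
  | case1 => simp [bigIdisj, support, hs.ne_empty]
  | case2 φ => simp [bigIdisj]
  | case3 φ l hl ih =>
    simp only [bigIdisj_cons hl, support, ih, List.mem_cons, exists_eq_or_imp]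

variable {X : Set (Form P)} (hX : X.Finite)
include hX

theorem truth_sAnd : truth M w (sAnd X) ↔ ∀ φ ∈ X, truth M w φ := by
  simp only [sAnd, hX, dite_true, truth_bigAnd, Finset.mem_toList, Set.Finite.mem_toFinset]

theorem truth_sOr : truth M w (sOr X) ↔ ∃ φ ∈ X, truth M w φ := by
  simp only [sOr, hX, dite_true, truth_bigOr, Finset.mem_toList, Set.Finite.mem_toFinset]

variable {M} in
theorem support_sIdisj {s : Set M.W} (hs : s.Nonempty) :
    support M (sIdisj X) s ↔ ∃ φ ∈ X, support M φ s := by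
  simp only [sIdisj, hX, dite_true, support_bigIdisj hs, Finset.mem_toList,
    Set.Finite.mem_toFinset]

end Truth

namespace IsDecl

variable {P : Type} {φ ψ : Form P}

theorem truthConditional_s12 (h : IsDecl φ) : TruthConditional φ := by
  intro M s
  induction h generalizing s with
  | atom p => simp only [truth_atom, support]
  | bot => simp only [support, not_truth_bot, Set.eq_empty_iff_forall_notMem]
  | and _ _ ihα ihβ => simp only [support, truth_and, ihα s, ihβ s, forall₂_and]
  | impl _ _ ihα ihβ =>
    constructor
    · exact fun h w hw t ht => h t (ht.trans (Set.singleton_subset_iff.2 hw))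
    · intro h t hts hα
      refine (ihβ t).2 fun w hw => h w (hts hw) {w} Set.Subset.rfl ?_
      exact (ihα t).1 hα w hw
  | yields φ ψ => simp only [truth_yields, support]

theorem neg (h : IsDecl φ) : IsDecl φ.neg :=
  impl h bot

theorem or (hφ : IsDecl φ) (hψ : IsDecl ψ) : IsDecl (φ.or ψ) :=
  (and hφ.neg hψ.neg).neg

end IsDecl

section BigConnectives

variable {P : Type} {l : List (Form P)} {X : Set (Form P)}

theorem isDecl_bigAnd (hl : ∀ φ ∈ l, IsDecl φ) : IsDecl (bigAnd l) := by
  induction l using bigAnd.induct with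
  | case1 => exact IsDecl.bot.neg
  | case2 φ => exact hl φ List.mem_cons_self
  | case3 φ l hne ih =>
    rw [bigAnd_cons hne]
    obtain ⟨hφ, hl⟩ := List.forall_mem_cons.1 hl
    exact hφ.and (ih hl)

theorem isDecl_bigOr (hl : ∀ φ ∈ l, IsDecl φ) : IsDecl (bigOr l) := by
  induction l using bigOr.induct with
  | case1 => exact .bot
  | case2 φ => exact hl φ List.mem_cons_self
  | case3 φ l hne ih =>
    rw [bigOr_cons hne]
    obtain ⟨hφ, hl⟩ := List.forall_mem_cons.1 hl
    exact hφ.or (ih hl)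

theorem isDecl_sAnd (h : ∀ φ ∈ X, IsDecl φ) : IsDecl (sAnd X) := by
  unfold sAnd
  split_ifs with hX
  · exact isDecl_bigAnd (by simpa using h)
  · exact .bot

theorem isDecl_sOr (h : ∀ φ ∈ X, IsDecl φ) : IsDecl (sOr X) := by
  unfold sOr
  split_ifs with hX
  · exact isDecl_bigOr (by simpa using h)
  · exact .bot

end BigConnectives

/-- The cover modality `∇X = ¬(⋁X ⟹ ⩔{¬φ : φ ∈ X})`, for finite sets `X` of declaratives. -/
noncomputable def nabla {P : Type} (X : Set (Form P)) : Form P :=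
  .neg (.yields (sOr X) (sIdisj (Form.neg '' X)))

section Nabla

variable {P : Type} {X : Set (Form P)}

theorem support_sOr_of_isDecl (M : InModel P) (hX : X.Finite) (hdecl : ∀ φ ∈ X, IsDecl φ)
    (s : Set M.W) : support M (sOr X) s ↔ ∀ w ∈ s, ∃ φ ∈ X, truth M w φ := by
  simp only [(isDecl_sOr hdecl).truthConditional_s12 M s, truth_sOr M _ hX]

theorem not_support_sIdisj_neg {M : InModel P} (hX : X.Finite) (hdecl : ∀ φ ∈ X, IsDecl φ)
    {s : Set M.W} (hs : s.Nonempty) :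
    ¬ support M (sIdisj (Form.neg '' X)) s ↔ ∀ φ ∈ X, ∃ w ∈ s, truth M w φ := by
  rw [support_sIdisj (hX.image _) hs, Set.exists_mem_image]
  push Not
  refine forall₂_congr fun φ hφ => ?_
  rw [(hdecl φ hφ).neg.truthConditional_s12 M s]
  simp only [truth_neg, not_forall, not_not, exists_prop]

theorem truth_nabla (M : InModel P) (w : M.W) (hX : X.Finite) (hdecl : ∀ φ ∈ X, IsDecl φ) :
    truth M w (nabla X) ↔ ∃ s ∈ M.Nb w, EgliMilner (truth M) s X := by
  rw [nabla, truth_neg, truth_yields]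
  push Not
  refine exists_congr fun s => and_congr_right fun hs => and_congr ?_ ?_
  · exact support_sOr_of_isDecl M hX hdecl s
  · exact not_support_sIdisj_neg hX hdecl (M.nb_nonempty w s hs)

theorem piAux_eq_nabla (c : ∀ M : InModel P, M.W → Form P) (M : InModel P) (s : Set M.W) :
    piAux c M s = nabla (c M '' s) := by
  simp only [piAux, nabla, Set.image_image]
  simp only [Set.image, eq_comm]

theorem isDecl_piAux (c : ∀ M : InModel P, M.W → Form P) (M : InModel P) (s : Set M.W) :
    IsDecl (piAux c M s) :=
  (IsDecl.yields _ _).neg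

theorem finite_piAux {c : ∀ M : InModel P, M.W → Form P}
    (hc : {f | ∃ (M : InModel P) (w : M.W), f = c M w}.Finite) :
    {f | ∃ (M : InModel P) (s : Set M.W), f = piAux c M s}.Finite := by
  refine (hc.finite_subsets.image nabla).subset ?_
  rintro _ ⟨M, s, rfl⟩
  refine ⟨c M '' s, ?_, (piAux_eq_nabla c M s).symm⟩
  rintro _ ⟨w, -, rfl⟩
  exact ⟨M, w, rfl⟩

end Nabla

section CharacteristicFormulas

variable {P : Type} [Fintype P]

theorem finite_chiZero : {f : Form P | ∃ (M : InModel P) (w : M.W), f = chiZero M w}.Finite := by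
  refine (Set.finite_range fun v : P → Bool => bigAnd ((Finset.univ : Finset P).toList.map
    fun p => if v p then Form.atom p else Form.neg (Form.atom p))).subset ?_
  rintro _ ⟨M, w, rfl⟩
  exact ⟨M.V w, rfl⟩

theorem finite_chi (n : ℕ) :
    {f : Form P | ∃ (M : InModel P) (w : M.W), f = chi n M w}.Finite := by
  induction n with
  | zero => exact finite_chiZero
  | succ n ih =>
    have hπ := finite_piAux ih
    refine ((finite_chiZero.prod (hπ.finite_subsets.prod
      (hπ.image Form.neg).finite_subsets)).image fun x : Form P × Set (Form P) × Set (Form P) =>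
        Form.and (Form.and x.1 (sAnd x.2.1)) (sAnd x.2.2)).subset ?_
    rintro _ ⟨M, w, rfl⟩
    refine ⟨(_, _, _), ⟨⟨M, w, rfl⟩, ?_, ?_⟩, rfl⟩
    · rintro _ ⟨s, -, rfl⟩
      exact ⟨M, s, rfl⟩
    · rintro _ ⟨M', s', rfl, -⟩
      exact ⟨_, ⟨M', s', rfl⟩, rfl⟩

theorem isDecl_chiZero (M : InModel P) (w : M.W) : IsDecl (chiZero M w) := by
  refine isDecl_bigAnd fun φ hφ => ?_
  obtain ⟨p, -, rfl⟩ := List.mem_map.1 hφ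
  split_ifs
  · exact .atom p
  · exact (IsDecl.atom p).neg

theorem isDecl_chi (n : ℕ) (M : InModel P) (w : M.W) : IsDecl (chi n M w) := by
  cases n with
  | zero => exact isDecl_chiZero M w
  | succ n =>
    refine .and (.and (isDecl_chiZero M w) (isDecl_sAnd ?_)) (isDecl_sAnd ?_)
    · rintro _ ⟨s, -, rfl⟩
      exact isDecl_piAux _ M s
    · rintro _ ⟨M', s', rfl, -⟩
      exact (isDecl_piAux _ M' s').neg

theorem truth_chiZero (M M' : InModel P) (w : M.W) (w' : M'.W) :
    truth M w (chiZero M' w') ↔ M.V w = M'.V w' := by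
  simp only [chiZero, truth_bigAnd, List.forall_mem_map, Finset.mem_toList, Finset.mem_univ,
    true_imp_iff, funext_iff]
  refine forall_congr' fun p => ?_
  cases M'.V w' p <;> simp [truth_neg, truth_atom]

theorem truth_piChar (n : ℕ) (M M' : InModel P) (w : M.W) (s' : Set M'.W) :
    truth M w (piChar n M' s') ↔
      ∃ s ∈ M.Nb w, EgliMilner (fun v v' => truth M v (chi n M' v')) s s' := by
  have hfin : (chi n M' '' s').Finite :=
    (finite_chi n).subset fun _ ⟨w', _, h⟩ => ⟨M', w', h.symm⟩
  have hdecl : ∀ φ ∈ chi n M' '' s', IsDecl φ :=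
    Set.forall_mem_image.2 fun w' _ => isDecl_chi n M' w'
  simp only [piChar, piAux_eq_nabla, truth_nabla M w hfin hdecl, EgliMilner.image_right_iff]

theorem truth_chi_succ (n : ℕ) (M M' : InModel P) (w : M.W) (w' : M'.W) :
    truth M w (chi (n + 1) M' w') ↔
      M.V w = M'.V w' ∧ (∀ s' ∈ M'.Nb w', truth M w (piChar n M' s')) ∧
        ∀ (M'' : InModel P) (s'' : Set M''.W), truth M w (piChar n M'' s'') →
          ∃ s' ∈ M'.Nb w', NBisimS n M' s' M'' s'' := by
  have hπ := finite_piAux (finite_chi (P := P) n)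
  rw [chi, truth_and, truth_and, truth_chiZero, and_assoc, truth_sAnd, truth_sAnd]
  · refine and_congr_right' (and_congr ?_ ?_)
    · exact ⟨fun h s' hs' => h _ ⟨s', hs', rfl⟩, by rintro h _ ⟨s', hs', rfl⟩; exact h s' hs'⟩
    · constructor
      · intro h M'' s'' hs''
        by_contra hne
        exact (truth_neg M w _).1 (h _ ⟨M'', s'', rfl, hne⟩) hs''
      · rintro h _ ⟨M'', s'', rfl, hne⟩
        exact (truth_neg M w _).2 (mt (h M'' s'') hne)
  · refine (hπ.image Form.neg).subset ?_
    rintro _ ⟨M'', s'', rfl, -⟩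
    exact ⟨_, ⟨M'', s'', rfl⟩, rfl⟩
  · refine hπ.subset ?_
    rintro _ ⟨s', -, rfl⟩
    exact ⟨M', s', rfl⟩

theorem truth_chi (n : ℕ) (M M' : InModel P) (w : M.W) (w' : M'.W) :
    truth M w (chi n M' w') ↔ BisimApprox M M' n w w' := by
  induction n generalizing M M' with
  | zero => exact truth_chiZero M M' w w'
  | succ n ih =>
    simp only [truth_chi_succ, truth_piChar, ih, nBisimS_iff]
    rw [← BisimApprox.forth_iff]
    exact and_congr_right' and_comm

end CharacteristicFormulas

/-- the characteristic formulas are well-defined (for each `n`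
there are only finitely many distinct formulas `χⁿ` and `πⁿ`, so all
conjunctions and disjunctions in their definition are over finite sets of
formulas), `χⁿ_{M',w'}` defines `n`-bisimilarity to `⟨M',w'⟩`, and `πⁿ_{M',s'}`
defines having a neighborhood `n`-bisimilar to `⟨M',s'⟩`. -/
theorem characteristic_formulas {P : Type} [Fintype P] (n : ℕ) :
    (Set.Finite {f : Form P | ∃ (M : InModel P) (w : M.W), f = chi n M w}) ∧
    (Set.Finite {f : Form P | ∃ (M : InModel P) (s : Set M.W), f = piChar n M s}) ∧
    (∀ (M M' : InModel P) (w : M.W) (w' : M'.W),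
      truth M w (chi n M' w') ↔ NBisimW n M w M' w') ∧
    (∀ (M M' : InModel P) (w : M.W) (s' : Set M'.W),
      truth M w (piChar n M' s') ↔ ∃ s ∈ M.Nb w, NBisimS n M s M' s') := by
  refine ⟨finite_chi n, finite_piAux (finite_chi n), fun M M' w w' => ?_, fun M M' w s' => ?_⟩
  · rw [truth_chi, nBisimW_iff]
  · simp only [truth_piChar, truth_chi, nBisimS_iff]
end

section
/- (Expressive power of InqML_⟹ with respect to worlds) Assume the set P of atoms is finite. A world-property C (a class of world-pointed in-models) is definable in InqML_⟹ (i.e., C = {⟨M,w⟩ : M,w ⊨ φ} for some formula φ of L_⟹) if and only if C is closed under ∼ₙ for some n ∈ ℕ. -/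
/-!
A formula of modal depth at most `n` cannot separate `n`-bisimilar states, so a definable
world-property is closed under `∼ₙ`.

Conversely, when `P` is finite there are only finitely many `n`-types, which classify worlds up to
`∼ₙ`; hence it suffices to express each `n`-type by a formula. The formula has to be
truth-conditional, so that it can be used under `⟹`, where it is evaluated at states rather than
worlds. For truth-conditional `α` and `βᵢ`, the formula `¬(α ⟹ ⩔ᵢ ¬βᵢ)` says that some
neighborhood satisfies `α` throughout and contains, for each `i`, a world satisfying `βᵢ`. With `βᵢ`
ranging over descriptions of the `n`-types in a set `B`, and `α` describing membership in `B`, it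
says that some neighborhood realizes exactly the `n`-types in `B`; an `(n + 1)`-type records the
valuation and which sets `B` are so realized.
-/

section Invariance

variable {P : Type} {M M' : InModel P} {n : ℕ} {s : Set M.W} {s' : Set M'.W} {w : M.W} {w' : M'.W}

theorem EM.symm {Z : M.W → M'.W → Prop} (h : EM Z s s') : EM (flip Z) s' s :=
  ⟨h.2, h.1⟩

theorem IsNBisim.symm {Z : ℕ → M.W → M'.W → Prop} (hZ : IsNBisim M M' n Z) :
    IsNBisim M' M n fun i => flip (Z i) := by
  intro i hi w' w hww'
  obtain ⟨hV, hNb⟩ := hZ i hi w w' hww'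
  refine ⟨fun p => (hV p).symm, fun j hj => ⟨fun t' ht' => ?_, fun t ht => ?_⟩⟩
  · obtain ⟨t, ht, htt'⟩ := (hNb j hj).2 t' ht'
    exact ⟨t, ht, htt'.symm⟩
  · obtain ⟨t', ht', htt'⟩ := (hNb j hj).1 t ht
    exact ⟨t', ht', htt'.symm⟩

theorem IsNBisim.mono {Z : ℕ → M.W → M'.W → Prop} (hZ : IsNBisim M M' n Z) {m : ℕ} (hmn : m ≤ n) :
    IsNBisim M M' m Z :=
  fun i hi => hZ i (hi.trans hmn)

theorem NBisimS.symm (h : NBisimS n M s M' s') : NBisimS n M' s' M s := by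
  obtain ⟨Z, hZ, hs⟩ := h
  exact ⟨_, hZ.symm, hs.symm⟩

theorem NBisimS.exists_mem (h : NBisimS n M s M' s') (hw : w ∈ s) :
    ∃ w' ∈ s', NBisimW n M w M' w' := by
  obtain ⟨Z, hZ, hs⟩ := h
  obtain ⟨w', hw', hww'⟩ := hs.1 w hw
  exact ⟨w', hw', Z, hZ, hww'⟩

theorem NBisimS.exists_subset (h : NBisimS n M s M' s') {t : Set M.W} (ht : t ⊆ s) :
    ∃ t' ⊆ s', NBisimS n M t M' t' := by
  obtain ⟨Z, hZ, hs⟩ := h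
  refine ⟨{w' ∈ s' | ∃ w ∈ t, Z n w w'}, Set.sep_subset _ _, Z, hZ, fun w hw => ?_,
    fun w' hw' => hw'.2⟩
  obtain ⟨w', hw', hww'⟩ := hs.1 w (ht hw)
  exact ⟨w', ⟨hw', w, hw, hww'⟩, hww'⟩

theorem NBisimW.valuation_eq (h : NBisimW n M w M' w') (p : P) : M.V w p = M'.V w' p := by
  obtain ⟨Z, hZ, hww'⟩ := h
  exact (hZ n le_rfl w w' hww').1 p

theorem NBisimW.exists_nb (h : NBisimW (n + 1) M w M' w') {t : Set M.W}
    (ht : t ∈ M.Nb w) : ∃ t' ∈ M'.Nb w', NBisimS n M t M' t' := by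
  obtain ⟨Z, hZ, hww'⟩ := h
  obtain ⟨t', ht', htt'⟩ := ((hZ (n + 1) le_rfl w w' hww').2 n rfl).1 t ht
  exact ⟨t', ht', Z, hZ.mono n.le_succ, htt'⟩

theorem NBisimW.nBisimS_singleton (h : NBisimW n M w M' w') : NBisimS n M {w} M' {w'} := by
  obtain ⟨Z, hZ, hww'⟩ := h
  exact ⟨Z, hZ, by simpa [EM] using hww'⟩

theorem support_of_nBisimS {φ : Form P} (h : NBisimS n M s M' s') (hφ : md φ ≤ n)
    (hs : support M φ s) : support M' φ s' := by
  induction φ generalizing n M M' s s' with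
  | atom p =>
    intro w' hw'
    obtain ⟨w, hw, hww'⟩ := h.symm.exists_mem hw'
    exact (hww'.valuation_eq p).trans (hs w hw)
  | bot =>
    refine Set.eq_empty_of_forall_notMem fun w' hw' => ?_
    obtain ⟨w, hw, -⟩ := h.symm.exists_mem hw'
    exact Set.eq_empty_iff_forall_notMem.mp hs w hw
  | and φ ψ ihφ ihψ =>
    obtain ⟨hφ, hψ⟩ := max_le_iff.mp hφ
    exact hs.imp (ihφ h hφ) (ihψ h hψ)
  | idisj φ ψ ihφ ihψ =>
    obtain ⟨hφ, hψ⟩ := max_le_iff.mp hφ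
    exact hs.imp (ihφ h hφ) (ihψ h hψ)
  | impl φ ψ ihφ ihψ =>
    obtain ⟨hφ, hψ⟩ := max_le_iff.mp hφ
    intro t' ht' ht'φ
    obtain ⟨t, ht, htt'⟩ := h.symm.exists_subset ht'
    exact ihψ htt'.symm hψ (hs t ht (ihφ htt' hφ ht'φ))
  | yields φ ψ ihφ ihψ =>
    obtain ⟨m, rfl⟩ := Nat.exists_eq_add_one_of_ne_zero (Nat.ne_zero_of_lt hφ)
    obtain ⟨hφ, hψ⟩ := max_le_iff.mp (Nat.le_of_succ_le_succ hφ)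
    intro w' hw' t' ht' ht'φ
    obtain ⟨w, hw, hww'⟩ := h.symm.exists_mem hw'
    obtain ⟨t, ht, htt'⟩ := hww'.exists_nb ht'
    exact ihψ htt'.symm hψ (hs w hw t ht (ihφ htt' hφ ht'φ))

theorem truth_of_nBisimW {φ : Form P} (h : NBisimW n M w M' w') (hφ : md φ ≤ n)
    (hw : truth M w φ) : truth M' w' φ :=
  support_of_nBisimS h.nBisimS_singleton hφ hw

end Invariance

section NType

/-- The possible `n`-types of worlds: a `0`-type is a valuation, and an `(n + 1)`-type consists of
a valuation and a collection of sets of `n`-types, one for each neighborhood. -/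
def NType (P : Type) : ℕ → Type
  | 0 => P → Bool
  | n + 1 => (P → Bool) × Set (Set (NType P n))

instance NType.finite (P : Type) [Finite P] : ∀ n, Finite (NType P n)
  | 0 => inferInstanceAs (Finite (P → Bool))
  | n + 1 =>
    have := NType.finite P n
    inferInstanceAs (Finite ((P → Bool) × Set (Set (NType P n))))

variable {P : Type}

/-- The `n`-type of a world, describing it up to `n`-bisimilarity. -/
def nType (M : InModel P) : (n : ℕ) → M.W → NType P n
  | 0, w => M.V w
  | n + 1, w => (M.V w, Set.image (nType M n) '' M.Nb w)

variable {M M' : InModel P}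

theorem em_eq_iff_image_eq {T : Type*} {f : M.W → T} {g : M'.W → T} {s : Set M.W} {s' : Set M'.W} :
    EM (M := M) (M' := M') (fun w w' => f w = g w') s s' ↔ f '' s = g '' s' := by
  rw [Set.Subset.antisymm_iff, Set.image_subset_iff, Set.image_subset_iff]
  simp only [EM, Set.subset_def, Set.mem_preimage, Set.mem_image, @eq_comm T (f _)]

theorem valuation_eq_of_nType_eq {n : ℕ} {w : M.W} {w' : M'.W} (h : nType M n w = nType M' n w') :
    M.V w = M'.V w' := by
  cases n with
  | zero => exact h
  | succ n => exact congrArg Prod.fst h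

theorem isNBisim_nType_eq (n : ℕ) :
    IsNBisim M M' n fun i w w' => nType M i w = nType M' i w' := by
  intro i _ w w' h
  refine ⟨congrFun (valuation_eq_of_nType_eq h), ?_⟩
  rintro j rfl
  have hNb : Set.image (nType M j) '' M.Nb w = Set.image (nType M' j) '' M'.Nb w' :=
    congrArg Prod.snd h
  simp only [em_eq_iff_image_eq]
  refine ⟨fun t ht => ?_, fun t' ht' => ?_⟩
  · obtain ⟨t', ht', htt'⟩ := hNb.subset (Set.mem_image_of_mem _ ht)
    exact ⟨t', ht', htt'.symm⟩
  · exact hNb.superset (Set.mem_image_of_mem _ ht')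

theorem nBisimW_of_nType_eq {n : ℕ} {w : M.W} {w' : M'.W} (h : nType M n w = nType M' n w') :
    NBisimW n M w M' w' :=
  ⟨_, isNBisim_nType_eq n, h⟩

end NType

section Expressibility

variable {P : Type}

/-- The formula `α` is truth-conditional and defines the world-property `Q`. -/
def Form.Expresses (α : Form P) (Q : ∀ M : InModel P, M.W → Prop) : Prop :=
  ∀ (M : InModel P) (s : Set M.W), support M α s ↔ ∀ w ∈ s, Q M w

namespace Form.Expresses

variable {α β : Form P} {Q R : ∀ M : InModel P, M.W → Prop}

theorem truth_iff (h : α.Expresses Q) {M : InModel P} {w : M.W} : truth M w α ↔ Q M w := by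
  simp [truth, h M]

theorem atom (p : P) : (Form.atom p).Expresses fun M w => M.V w p = true :=
  fun _ _ => Iff.rfl

theorem bot : (Form.bot : Form P).Expresses ⊥ :=
  fun _ _ => Set.eq_empty_iff_forall_notMem

theorem and (hα : α.Expresses Q) (hβ : β.Expresses R) : (α.and β).Expresses (Q ⊓ R) := by
  intro M s
  simp [support, hα M, hβ M, forall_and]

theorem neg (hα : α.Expresses Q) : α.neg.Expresses Qᶜ := by
  intro M s
  simp only [Form.neg, support, hα M]
  constructor
  · intro h w hw hQ
    exact Set.singleton_ne_empty w (h {w} (by simpa) (by simpa))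
  · intro h t ht hQ
    exact Set.eq_empty_of_forall_notMem fun w hw => h w (ht hw) (hQ w hw)

theorem yields (φ ψ : Form P) : (Form.yields φ ψ).Expresses
    fun M w => ∀ t ∈ M.Nb w, support M φ t → support M ψ t :=
  fun _ _ => Iff.rfl

end Form.Expresses

/-- The Boolean algebra of world-properties defined by truth-conditional formulas. -/
def expressible (P : Type) : BooleanSubalgebra (∀ M : InModel P, M.W → Prop) where
  carrier := {Q | ∃ α : Form P, α.Expresses Q}
  bot_mem' := ⟨_, .bot⟩
  compl_mem' := fun ⟨_, hα⟩ => ⟨_, hα.neg⟩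
  infClosed' := fun _ ⟨_, hα⟩ _ ⟨_, hβ⟩ => ⟨_, hα.and hβ⟩
  supClosed' := fun _ ⟨α, hα⟩ _ ⟨β, hβ⟩ =>
    ⟨α.or β, by
      simpa only [Form.or, compl_inf, compl_compl] using (hα.neg.and hβ.neg).neg⟩

theorem mem_mem_expressible {T : Type*} [Finite T] {f : ∀ M : InModel P, M.W → T}
    (hf : ∀ τ, (fun M w => f M w = τ) ∈ expressible P) (A : Set T) :
    (fun M w => f M w ∈ A) ∈ expressible P := by
  have hA : (fun M w => f M w ∈ A) = ⨆ τ ∈ A, fun (M : InModel P) (w : M.W) => f M w = τ := by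
    ext M w
    simp
  rw [hA]
  exact BooleanSubalgebra.biSup_mem A.toFinite fun τ _ => hf τ

theorem exists_support_iff_exists {ι : Type*} [Finite ι] (ψ : ι → Form P) :
    ∃ φ : Form P, ∀ (M : InModel P) (s : Set M.W), s.Nonempty →
      (support M φ s ↔ ∃ i, support M (ψ i) s) := by
  obtain ⟨l, -, hl⟩ := Finite.exists_univ_list ι
  suffices h : ∀ l : List ι, ∃ φ : Form P, ∀ (M : InModel P) (s : Set M.W), s.Nonempty →
      (support M φ s ↔ ∃ i ∈ l, support M (ψ i) s) by simpa [hl] using h l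
  intro l
  induction l with
  | nil => exact ⟨.bot, fun M s hs => by simp [support, hs.ne_empty]⟩
  | cons i l ih =>
    obtain ⟨φ, hφ⟩ := ih
    exact ⟨.idisj (ψ i) φ, fun M s hs => by simp [support, hφ M s hs]⟩

theorem exists_nb_mem_expressible {ι : Type*} [Finite ι]
    {Q : ∀ M : InModel P, M.W → Prop} {R : ι → ∀ M : InModel P, M.W → Prop}
    (hQ : Q ∈ expressible P) (hR : ∀ i, R i ∈ expressible P) :
    (fun M w => ∃ t ∈ M.Nb w, (∀ v ∈ t, Q M v) ∧ ∀ i, ∃ v ∈ t, R i M v) ∈ expressible P := by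
  obtain ⟨α, hα⟩ := hQ
  choose β hβ using hR
  obtain ⟨ψ, hψ⟩ := exists_support_iff_exists fun i => (β i).neg
  refine ⟨(Form.yields α ψ).neg, ?_⟩
  convert (Form.Expresses.yields α ψ).neg using 1
  ext M w
  have hψ_nb : ∀ t ∈ M.Nb w, (support M ψ t ↔ ∃ i, ∀ v ∈ t, ¬ R i M v) := fun t ht =>
    (hψ M t (M.nb_nonempty w t ht)).trans (exists_congr fun i => (hβ i).neg M t)
  simp +contextual [hα M, hψ_nb]

theorem mem_image_nb_mem_expressible {T : Type*} [Finite T] {f : ∀ M : InModel P, M.W → T}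
    (hf : ∀ τ, (fun M w => f M w = τ) ∈ expressible P) (B : Set T) :
    (fun M w => B ∈ Set.image (f M) '' M.Nb w) ∈ expressible P := by
  have image_eq_iff (M : InModel P) (t : Set M.W) :
      f M '' t = B ↔ (∀ v ∈ t, f M v ∈ B) ∧ ∀ τ : B, ∃ v ∈ t, f M v = τ := by
    simp [Set.Subset.antisymm_iff, Set.subset_def]
  simp only [Set.mem_image, image_eq_iff]
  exact exists_nb_mem_expressible (mem_mem_expressible hf B) fun τ : B => hf τ

theorem set_eq_mem_expressible {X : Type*} [Finite X] {S : ∀ M : InModel P, M.W → Set X}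
    (hS : ∀ x, (fun M w => x ∈ S M w) ∈ expressible P) (A : Set X) :
    (fun M w => S M w = A) ∈ expressible P := by
  have mem_iff_mem_expressible (x : X) : (fun M w => x ∈ S M w ↔ x ∈ A) ∈ expressible P := by
    by_cases hx : x ∈ A
    · simpa only [hx, iff_true] using hS x
    · simp only [hx, iff_false]
      exact BooleanSubalgebra.compl_mem (hS x)
  convert BooleanSubalgebra.iInf_mem mem_iff_mem_expressible using 1
  ext M w
  simp [Set.ext_iff]

theorem valuation_eq_mem_expressible [Finite P] (v : P → Bool) :
    (fun M w => M.V w = v) ∈ expressible P := by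
  have valuation_eq_iff (M : InModel P) (w : M.W) :
      M.V w = v ↔ {p | M.V w p = true} = {p | v p = true} :=
    funext_iff.trans ((forall_congr' fun _ => Bool.eq_iff_iff).trans Set.ext_iff.symm)
  simp only [valuation_eq_iff]
  exact set_eq_mem_expressible (fun p => ⟨.atom p, .atom p⟩) _

theorem nType_eq_mem_expressible [Finite P] (n : ℕ) (τ : NType P n) :
    (fun M w => nType M n w = τ) ∈ expressible P := by
  induction n with
  | zero => exact valuation_eq_mem_expressible τ
  | succ n ih =>
    obtain ⟨v, A⟩ := τ
    have hNb := set_eq_mem_expressible (mem_image_nb_mem_expressible ih) A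
    convert BooleanSubalgebra.inf_mem (valuation_eq_mem_expressible v) hNb using 1
    ext M w
    exact Prod.ext_iff

theorem mem_expressible_of_forall_nBisimW [Finite P] {C : ∀ M : InModel P, M.W → Prop} {n : ℕ}
    (hC : ∀ (M M' : InModel P) (w : M.W) (w' : M'.W), C M w → NBisimW n M w M' w' → C M' w') :
    C ∈ expressible P := by
  convert mem_mem_expressible (nType_eq_mem_expressible n) {τ | ∃ M w, C M w ∧ nType M n w = τ}
    with M w
  refine ⟨fun hw => ⟨M, w, hw, rfl⟩, ?_⟩
  rintro ⟨M', w', hw', h⟩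
  exact hC M' M w' w hw' (nBisimW_of_nType_eq h)

end Expressibility

/-- over a finite set of atoms, a world-property is definable in
`InqML_⟹` iff it is closed under `∼ₙ` for some `n`. -/
theorem expressive_power_worlds {P : Type} [Fintype P]
    (C : ∀ M : InModel P, M.W → Prop) :
    (∃ φ : Form P, ∀ (M : InModel P) (w : M.W), C M w ↔ truth M w φ) ↔
    (∃ n : ℕ, ∀ (M M' : InModel P) (w : M.W) (w' : M'.W),
      C M w → NBisimW n M w M' w' → C M' w') := by
  constructor
  · rintro ⟨φ, hφ⟩
    refine ⟨md φ, fun M M' w w' hw hww' => ?_⟩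
    rw [hφ] at hw ⊢
    exact truth_of_nBisimW hww' le_rfl hw
  · rintro ⟨n, hC⟩
    obtain ⟨α, hα⟩ := mem_expressible_of_forall_nBisimW hC
    exact ⟨α, fun M w => hα.truth_iff.symm⟩
end
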